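/- Assume the LAG setup, and in addition: 𝓛 attains its infimum 𝓛* := inf 𝓛 and satisfies the Polyak–Łojasiewicz condition with constant μ > 0, i.e. 2μ(𝓛(θ) − 𝓛*) ≤ ‖∇𝓛(θ)‖² for all θ ∈ E; the condition number κ := L/μ satisfies D ≤ κ; the parameters are ξ_d = ξ for all d with 0 < ξ < 1/D, α = (1 − √(Dξ))/L, and β_d = (D − d + 1)ξ/(2α√(Dξ)) for d = 1, …, D. Then for every ε ∈ (0, 1) and every integer K with K − 1 ≥ (κ/(1 − √(Dξ))) · log(1/ε), one has 𝓛(θ^K) − 𝓛* ≤ ε · V^1. -/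

import Mathlib

open Finset

/-!
LAG is gradient descent with an inexact gradient. The trigger bounds the squared gradient error at
step `k` by `α⁻²` times a weighted sum of the last `D` squared displacements, so by the
Polyak–Łojasiewicz inequality one step contracts the optimality gap by the factor `1 - αμ`, up to
that error. The Lyapunov function adds the recent squared displacements with weights `β d`.
Passing from `k` to `k + 1` shifts each displacement one place, and the drop from `β d` to
`β (d + 1)` pays for the error, while the new displacement, entering with weight `β 1`, is absorbed
by the term `-(1 - Lα) / (2α) * ‖θ (k + 1) - θ k‖ ^ 2` of the descent inequality. Hence the whole
Lyapunov function contracts by the factor `1 - αμ`.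
-/

section InexactGradientStep

variable {E : Type*} [NormedAddCommGroup E] [InnerProductSpace ℝ E] [CompleteSpace E] {f : E → ℝ}
  {x : E} {L : ℝ}

lemma hasDerivAt_comp_add_smul (hf : Differentiable ℝ f) (x v : E) (t : ℝ) :
    HasDerivAt (fun t : ℝ => f (x + t • v)) (inner ℝ (gradient f (x + t • v)) v) t := by
  have hline : HasDerivAt (fun t : ℝ => x + t • v) v t := by
    simpa using ((hasDerivAt_id t).smul_const v).const_add x
  simpa [Function.comp_def] using
    (hf (x + t • v)).hasGradientAt.hasFDerivAt.comp_hasDerivAt t hline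

lemma inner_gradient_add_smul_le (hL : ∀ y, ‖gradient f y - gradient f x‖ ≤ L * ‖y - x‖) (v : E)
    {t : ℝ} (ht : 0 ≤ t) :
    inner ℝ (gradient f (x + t • v)) v ≤ inner ℝ (gradient f x) v + L * t * ‖v‖ ^ 2 := by
  rw [← sub_le_iff_le_add', ← inner_sub_left]
  calc inner ℝ (gradient f (x + t • v) - gradient f x) v
      ≤ ‖gradient f (x + t • v) - gradient f x‖ * ‖v‖ := real_inner_le_norm _ _
    _ ≤ L * ‖x + t • v - x‖ * ‖v‖ := by gcongr; exact hL _
    _ = L * t * ‖v‖ ^ 2 := by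
      rw [add_sub_cancel_left, norm_smul, Real.norm_of_nonneg ht]; ring

lemma apply_add_le_of_lipschitz_gradient (hf : Differentiable ℝ f)
    (hL : ∀ y, ‖gradient f y - gradient f x‖ ≤ L * ‖y - x‖) (v : E) :
    f (x + v) ≤ f x + inner ℝ (gradient f x) v + L / 2 * ‖v‖ ^ 2 := by
  have hmodel (t : ℝ) : HasDerivAt
      (fun t => f x + t * inner ℝ (gradient f x) v + L / 2 * ‖v‖ ^ 2 * t ^ 2)
      (inner ℝ (gradient f x) v + L * t * ‖v‖ ^ 2) t := by
    refine ((((hasDerivAt_id t).mul_const _).const_add (f x)).add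
      ((hasDerivAt_pow 2 t).const_mul (L / 2 * ‖v‖ ^ 2))).congr_deriv ?_
    push_cast
    ring
  have hline := hasDerivAt_comp_add_smul hf x v
  have hle := image_le_of_deriv_right_le_deriv_boundary (a := 0) (b := 1)
    (fun t _ => (hline t).continuousAt.continuousWithinAt)
    (fun t _ => (hline t).hasDerivWithinAt) (by simp)
    (fun t _ => (hmodel t).continuousAt.continuousWithinAt)
    (fun t _ => (hmodel t).hasDerivWithinAt)
    (fun t ht => inner_gradient_add_smul_le hL v ht.1) (Set.right_mem_Icc.2 zero_le_one)
  simpa using hle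

lemma apply_inexact_gradient_step_le (hf : Differentiable ℝ f)
    (hL : ∀ y, ‖gradient f y - gradient f x‖ ≤ L * ‖y - x‖) (α : ℝ) (h : E) :
    f (x - α • h) ≤ f x - α / 2 * ‖gradient f x‖ ^ 2 + α / 2 * ‖h - gradient f x‖ ^ 2
      - α / 2 * (1 - L * α) * ‖h‖ ^ 2 := by
  have hdescent := apply_add_le_of_lipschitz_gradient hf hL (-(α • h))
  rw [← sub_eq_add_neg, inner_neg_right, inner_smul_right, norm_neg, norm_smul, mul_pow,
    Real.norm_eq_abs, sq_abs] at hdescent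
  have hpolar := norm_sub_sq_real h (gradient f x)
  rw [real_inner_comm] at hpolar
  rw [hpolar]
  linarith

lemma gap_inexact_gradient_step_le {μ α fstar : ℝ} (hf : Differentiable ℝ f)
    (hL : ∀ y, ‖gradient f y - gradient f x‖ ≤ L * ‖y - x‖)
    (hPL : 2 * μ * (f x - fstar) ≤ ‖gradient f x‖ ^ 2) (hα : 0 ≤ α) (h : E) :
    f (x - α • h) - fstar ≤ (1 - α * μ) * (f x - fstar) + α / 2 * ‖h - gradient f x‖ ^ 2
      - α / 2 * (1 - L * α) * ‖h‖ ^ 2 := by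
  have hstep := apply_inexact_gradient_step_le hf hL α h
  have hgap := mul_le_mul_of_nonneg_left hPL (show 0 ≤ α / 2 by positivity)
  linarith

end InexactGradientStep

section DelayedGradients

lemma norm_sum_sq_le_of_forall_le_div_card_sq {ι E : Type*} [SeminormedAddCommGroup E]
    (s : Finset ι) {x : ι → E} {B : ℝ} (hB : 0 ≤ B) (hx : ∀ i ∈ s, ‖x i‖ ^ 2 ≤ B / (#s : ℝ) ^ 2) :
    ‖∑ i ∈ s, x i‖ ^ 2 ≤ B :=
  calc ‖∑ i ∈ s, x i‖ ^ 2 ≤ (∑ i ∈ s, ‖x i‖) ^ 2 := by gcongr; exact norm_sum_le _ _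
    _ ≤ #s * ∑ i ∈ s, ‖x i‖ ^ 2 := sq_sum_le_card_mul_sum_sq
    _ ≤ #s * (#s * (B / (#s : ℝ) ^ 2)) := by
      gcongr
      simpa using sum_le_card_nsmul s _ _ hx
    _ = B * ((#s : ℝ) ^ 2 / (#s : ℝ) ^ 2) := by ring
    _ ≤ B := mul_le_of_le_one_right hB (div_self_le_one _)

variable {ι E : Type*} [NormedAddCommGroup E] [InnerProductSpace ℝ E] [CompleteSpace E]
  {f : ι → E → ℝ} {x : E}

lemma gradient_fun_sum {s : Finset ι} (hf : ∀ i ∈ s, DifferentiableAt ℝ (f i) x) :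
    gradient (fun z => ∑ i ∈ s, f i z) x = ∑ i ∈ s, gradient (f i) x := by
  refine HasGradientAt.gradient ?_
  rw [hasGradientAt_iff_hasFDerivAt, map_sum]
  exact HasFDerivAt.fun_sum fun i hi => (hf i hi).hasGradientAt.hasFDerivAt

lemma norm_sum_gradient_sub_gradient_sum_sq_le [Fintype ι] {y : ι → E} {stale : Finset ι} {B : ℝ}
    (hf : ∀ i, DifferentiableAt ℝ (f i) x) (hB : 0 ≤ B) (hfresh : ∀ i ∉ stale, y i = x)
    (hstale : ∀ i ∈ stale,
      ‖gradient (f i) (y i) - gradient (f i) x‖ ^ 2 ≤ B / (Fintype.card ι : ℝ) ^ 2) :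
    ‖∑ i, gradient (f i) (y i) - gradient (fun z => ∑ i, f i z) x‖ ^ 2 ≤ B := by
  rw [gradient_fun_sum fun i _ => hf i, ← sum_sub_distrib]
  refine norm_sum_sq_le_of_forall_le_div_card_sq univ hB fun i _ => ?_
  by_cases hi : i ∈ stale
  · exact hstale i hi
  · rw [hfresh i hi, sub_self, norm_zero, zero_pow two_ne_zero]
    positivity

end DelayedGradients

section LyapunovFunction

variable {E : Type*} [NormedAddCommGroup E]

/-- The sum of the `D` most recent squared displacements of `θ` before time `k`, with weights `w`.
It serves both as the right-hand side of the trigger condition (`w = ξ`) and as the memory part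
of the Lyapunov function (`w = β`). -/
def weightedMovement (w : ℕ → ℝ) (D : ℕ) (θ : ℤ → E) (k : ℤ) : ℝ :=
  ∑ d ∈ Icc 1 D, w d * ‖θ (k + 1 - (d : ℤ)) - θ (k - (d : ℤ))‖ ^ 2

/-- The Lyapunov function `V^k` of the iteration `θ`: the optimality gap plus the weighted
recent movement. -/
def lyapunov (f : E → ℝ) (fstar : ℝ) (β : ℕ → ℝ) (D : ℕ) (θ : ℤ → E) (k : ℤ) : ℝ :=
  f (θ k) - fstar + weightedMovement β D θ k

variable {w ξ β : ℕ → ℝ} {D : ℕ} {θ : ℤ → E} {k : ℤ}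

lemma weightedMovement_congr {w' : ℕ → ℝ} (h : ∀ d ∈ Icc 1 D, w d = w' d) :
    weightedMovement w D θ = weightedMovement w' D θ :=
  funext fun _ => sum_congr rfl fun d hd => by rw [h d hd]

lemma weightedMovement_nonneg (hw : ∀ d ∈ Icc 1 D, 0 ≤ w d) : 0 ≤ weightedMovement w D θ k :=
  sum_nonneg fun d hd => mul_nonneg (hw d hd) (sq_nonneg _)

lemma weightedMovement_le_succ (hw : 0 ≤ w (D + 1)) :
    weightedMovement w D θ k ≤ weightedMovement w (D + 1) θ k := by
  rw [weightedMovement, weightedMovement, sum_Icc_succ_top (by lia)]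
  exact le_add_of_nonneg_right (mul_nonneg hw (sq_nonneg _))

lemma weightedMovement_succ_succ (w : ℕ → ℝ) (D : ℕ) (θ : ℤ → E) (k : ℤ) :
    weightedMovement w (D + 1) θ (k + 1) =
      w 1 * ‖θ (k + 1) - θ k‖ ^ 2 + weightedMovement (fun d => w (d + 1)) D θ k := by
  induction D with
  | zero => simp [weightedMovement]
  | succ D ih =>
    rw [weightedMovement, sum_Icc_succ_top (by lia), ← weightedMovement, ih, weightedMovement,
      weightedMovement, sum_Icc_succ_top (by lia), add_assoc]
    push_cast
    simp only [add_sub_add_right_eq_sub]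

lemma gap_le_lyapunov {f : E → ℝ} {fstar : ℝ} (hβ : ∀ d ∈ Icc 1 D, 0 ≤ β d) :
    f (θ k) - fstar ≤ lyapunov f fstar β D θ k :=
  le_add_of_nonneg_right (weightedMovement_nonneg hβ)

theorem lyapunov_succ_le [InnerProductSpace ℝ E] [CompleteSpace E] {f : E → ℝ}
    {fstar L μ α : ℝ} {h : E} (hf : Differentiable ℝ f)
    (hL : ∀ y, ‖gradient f y - gradient f (θ k)‖ ≤ L * ‖y - θ k‖)
    (hPL : 2 * μ * (f (θ k) - fstar) ≤ ‖gradient f (θ k)‖ ^ 2)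
    (hα : 0 < α) (hθ : θ (k + 1) = θ k - α • h)
    (herr : ‖h - gradient f (θ k)‖ ^ 2 ≤ 1 / α ^ 2 * weightedMovement ξ D θ k)
    (hβ_one : β 1 ≤ (1 - L * α) / (2 * α))
    (hβ_succ : ∀ d ∈ Icc 1 D, β (d + 1) + ξ d / (2 * α) ≤ (1 - α * μ) * β d)
    (hβ_last : 0 ≤ β (D + 1)) :
    lyapunov f fstar β D θ (k + 1) ≤ (1 - α * μ) * lyapunov f fstar β D θ k := by
  have hdisp : ‖θ (k + 1) - θ k‖ ^ 2 = α ^ 2 * ‖h‖ ^ 2 := by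
    rw [hθ, sub_sub_cancel_left, norm_neg, norm_smul, mul_pow, Real.norm_eq_abs, sq_abs]
  have hgap : f (θ (k + 1)) - fstar ≤ (1 - α * μ) * (f (θ k) - fstar)
      + 1 / (2 * α) * weightedMovement ξ D θ k
      - (1 - L * α) / (2 * α) * ‖θ (k + 1) - θ k‖ ^ 2 := by
    have hstep := gap_inexact_gradient_step_le hf hL hPL hα.le h
    have herr' := mul_le_mul_of_nonneg_left herr (half_pos hα).le
    have hcoeff : α / 2 * (1 / α ^ 2 * weightedMovement ξ D θ k)
        = 1 / (2 * α) * weightedMovement ξ D θ k := by field_simp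
    have hcoeff' : (1 - L * α) / (2 * α) * (α ^ 2 * ‖h‖ ^ 2)
        = α / 2 * (1 - L * α) * ‖h‖ ^ 2 := by field_simp
    rw [← hθ] at hstep
    rw [hdisp, hcoeff']
    linarith
  have hmove : weightedMovement β D θ (k + 1)
      ≤ (1 - L * α) / (2 * α) * ‖θ (k + 1) - θ k‖ ^ 2
        + weightedMovement (fun d => β (d + 1)) D θ k :=
    (weightedMovement_le_succ hβ_last).trans <| by
      rw [weightedMovement_succ_succ]
      gcongr
  have hpay : weightedMovement (fun d => β (d + 1)) D θ k
      + 1 / (2 * α) * weightedMovement ξ D θ k ≤ (1 - α * μ) * weightedMovement β D θ k := by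
    simp only [weightedMovement, mul_sum, ← sum_add_distrib]
    refine sum_le_sum fun d hd => ?_
    calc _ = (β (d + 1) + ξ d / (2 * α)) * ‖θ (k + 1 - (d : ℤ)) - θ (k - (d : ℤ))‖ ^ 2 := by ring
      _ ≤ (1 - α * μ) * β d * ‖θ (k + 1 - (d : ℤ)) - θ (k - (d : ℤ))‖ ^ 2 := by
        gcongr
        exact hβ_succ d hd
      _ = _ := mul_assoc _ _ _
  rw [lyapunov, lyapunov]
  linarith

end LyapunovFunction

section LagWeights

/-- The Lyapunov weights `β_d = (D - d + 1) ξ / (2 α √(D ξ))` attached to constant trigger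
constants `ξ_d = ξ₀`; they decrease linearly in `d` and vanish at `d = D + 1`. -/
noncomputable def lagWeight (D : ℕ) (ξ₀ α : ℝ) (d : ℕ) : ℝ :=
  ((D : ℝ) - (d : ℝ) + 1) * ξ₀ / (2 * α * Real.sqrt ((D : ℝ) * ξ₀))

variable {D d : ℕ} {ξ₀ α : ℝ}

lemma lagWeight_one (D : ℕ) (ξ₀ α : ℝ) :
    lagWeight D ξ₀ α 1 = Real.sqrt ((D : ℝ) * ξ₀) / (2 * α) := by
  rw [lagWeight, Nat.cast_one, sub_add_cancel, mul_comm (2 * α), ← div_div, Real.div_sqrt]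

lemma lagWeight_nonneg (hξ₀ : 0 ≤ ξ₀) (hα : 0 ≤ α) (hd : d ≤ D + 1) : 0 ≤ lagWeight D ξ₀ α d := by
  have hcoeff : (0 : ℝ) ≤ (D : ℝ) - d + 1 := by
    have : (d : ℝ) ≤ D + 1 := mod_cast hd
    linarith
  unfold lagWeight
  positivity

lemma lagWeight_succ_add_le {c : ℝ} (hD : 0 < D) (hξ₀ : 0 < ξ₀) (hα : 0 < α)
    (hc : c * ((D : ℝ) - d + 1) ≤ 1 - Real.sqrt ((D : ℝ) * ξ₀)) :
    lagWeight D ξ₀ α (d + 1) + ξ₀ / (2 * α) ≤ (1 - c) * lagWeight D ξ₀ α d := by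
  have hs : 0 < Real.sqrt ((D : ℝ) * ξ₀) := Real.sqrt_pos.2 (by positivity)
  unfold lagWeight
  generalize Real.sqrt ((D : ℝ) * ξ₀) = s at hs hc ⊢
  have hslack : (1 - c) * (((D : ℝ) - d + 1) * ξ₀ / (2 * α * s))
      - (((D : ℝ) - (d + 1 : ℕ) + 1) * ξ₀ / (2 * α * s) + ξ₀ / (2 * α))
      = ξ₀ / (2 * α * s) * (1 - s - c * ((D : ℝ) - d + 1)) := by
    push_cast
    field_simp
    ring
  have hslack_nonneg : 0 ≤ ξ₀ / (2 * α * s) * (1 - s - c * ((D : ℝ) - d + 1)) :=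
    mul_nonneg (by positivity) (by linarith)
  linarith

lemma sqrt_natCast_mul_lt_one (hD : 0 < D) (hξ₀ : ξ₀ < 1 / (D : ℝ)) :
    Real.sqrt ((D : ℝ) * ξ₀) < 1 := by
  rw [Real.sqrt_lt' one_pos, one_pow, mul_comm]
  exact (lt_div_iff₀ (mod_cast hD)).1 hξ₀

end LagWeights

lemma lyapunov_lagWeight_succ_le {E : Type*} [NormedAddCommGroup E] [InnerProductSpace ℝ E]
    [CompleteSpace E] {f : E → ℝ} {fstar L μ α ξ₀ : ℝ} {D : ℕ} {θ : ℤ → E} {k : ℤ} {h : E}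
    (hf : Differentiable ℝ f) (hL : ∀ y, ‖gradient f y - gradient f (θ k)‖ ≤ L * ‖y - θ k‖)
    (hPL : 2 * μ * (f (θ k) - fstar) ≤ ‖gradient f (θ k)‖ ^ 2) (hμ : 0 ≤ μ) (hD : 0 < D)
    (hξ₀ : 0 < ξ₀) (hα : 0 < α) (hLα : L * α ≤ 1 - Real.sqrt ((D : ℝ) * ξ₀))
    (hμα : α * μ * D ≤ 1 - Real.sqrt ((D : ℝ) * ξ₀)) (hθ : θ (k + 1) = θ k - α • h)
    (herr : ‖h - gradient f (θ k)‖ ^ 2 ≤ 1 / α ^ 2 * weightedMovement (fun _ => ξ₀) D θ k) :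
    lyapunov f fstar (lagWeight D ξ₀ α) D θ (k + 1)
      ≤ (1 - α * μ) * lyapunov f fstar (lagWeight D ξ₀ α) D θ k := by
  refine lyapunov_succ_le hf hL hPL hα hθ herr ?_ (fun d hd => ?_)
    (lagWeight_nonneg hξ₀.le hα.le le_rfl)
  · rw [lagWeight_one]
    gcongr
    linarith
  · have hd₁ : (1 : ℝ) ≤ d := mod_cast (mem_Icc.1 hd).1
    refine lagWeight_succ_add_le hD hξ₀ hα (le_trans ?_ hμα)
    gcongr
    linarith

section GeometricDecay

variable {c ε : ℝ}

lemma one_sub_pow_le_of_log_le {j : ℕ} (hc : c ≤ 1) (hε : 0 < ε)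
    (hj : Real.log (1 / ε) ≤ c * j) : (1 - c) ^ j ≤ ε :=
  calc (1 - c) ^ j ≤ Real.exp (-c) ^ j :=
        pow_le_pow_left₀ (sub_nonneg.2 hc) (Real.one_sub_le_exp_neg c) j
    _ = Real.exp (-(c * j)) := by rw [← Real.exp_nat_mul]; ring_nf
    _ ≤ ε := by
      rw [← Real.le_log_iff_exp_le hε]
      rw [one_div, Real.log_inv] at hj
      linarith

lemma le_mul_of_geometric_decay {V : ℤ → ℝ} {K : ℤ} (hc₀ : 0 < c) (hc₁ : c ≤ 1) (hV₁ : 0 ≤ V 1)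
    (hV : ∀ k, 1 ≤ k → V (k + 1) ≤ (1 - c) * V k) (hε₀ : 0 < ε) (hε₁ : ε ≤ 1)
    (hK : 1 / c * Real.log (1 / ε) ≤ (K : ℝ) - 1) : V K ≤ ε * V 1 := by
  have hlog : 0 ≤ Real.log (1 / ε) := Real.log_nonneg (one_le_one_div hε₀ hε₁)
  have hK₁ : (1 : ℝ) ≤ K := sub_nonneg.1 (le_trans (by positivity) hK)
  obtain ⟨j, rfl⟩ := Int.le.dest (show 1 ≤ K from mod_cast hK₁)
  have hj : Real.log (1 / ε) ≤ c * j := by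
    rw [one_div_mul_eq_div, div_le_iff₀' hc₀] at hK
    simpa using hK
  calc V (1 + j) ≤ (1 - c) ^ j * V 1 := by
        simpa using le_geom (u := fun i : ℕ => V (1 + i)) (sub_nonneg.2 hc₁) j fun i _ => by
          simpa [add_assoc] using hV (1 + i) (by lia)
    _ ≤ ε * V 1 := by gcongr; exact one_sub_pow_le_of_log_le hc₁ hε₀ hj

end GeometricDecay

theorem inexact_gradient_descent_gap_le {E : Type*} [NormedAddCommGroup E] [InnerProductSpace ℝ E]
    [CompleteSpace E] {f : E → ℝ} (hf : Differentiable ℝ f) {L μ fstar : ℝ} (hL : 0 < L)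
    (hμ : 0 < μ) (hsmooth : ∀ x y, ‖gradient f x - gradient f y‖ ≤ L * ‖x - y‖)
    (hinf : ∀ x, fstar ≤ f x) (hPL : ∀ x, 2 * μ * (f x - fstar) ≤ ‖gradient f x‖ ^ 2)
    {D : ℕ} (hD : 1 ≤ D) (hκ : (D : ℝ) ≤ L / μ) {ξ₀ α : ℝ} (hξ₀ : 0 < ξ₀)
    (hξ₀D : ξ₀ < 1 / (D : ℝ)) (hα : α = (1 - Real.sqrt ((D : ℝ) * ξ₀)) / L) {θ h : ℤ → E}
    (hupd : ∀ k, 1 ≤ k → θ (k + 1) = θ k - α • h k)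
    (herr : ∀ k, 1 ≤ k →
      ‖h k - gradient f (θ k)‖ ^ 2 ≤ 1 / α ^ 2 * weightedMovement (fun _ => ξ₀) D θ k)
    {ε : ℝ} (hε₀ : 0 < ε) (hε₁ : ε ≤ 1) {K : ℤ}
    (hK : (L / μ) / (1 - Real.sqrt ((D : ℝ) * ξ₀)) * Real.log (1 / ε) ≤ (K : ℝ) - 1) :
    f (θ K) - fstar ≤ ε * lyapunov f fstar (lagWeight D ξ₀ α) D θ 1 := by
  have hs : 0 < 1 - Real.sqrt ((D : ℝ) * ξ₀) := sub_pos.2 (sqrt_natCast_mul_lt_one hD hξ₀D)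
  have hα₀ : 0 < α := hα ▸ div_pos hs hL
  have hLα : L * α = 1 - Real.sqrt ((D : ℝ) * ξ₀) := by rw [hα, mul_div_cancel₀ _ hL.ne']
  have hμα : α * μ * D ≤ 1 - Real.sqrt ((D : ℝ) * ξ₀) :=
    calc α * μ * D = α * (D * μ) := by ring
      _ ≤ α * L := by gcongr; exact (le_div_iff₀ hμ).1 hκ
      _ = 1 - Real.sqrt ((D : ℝ) * ξ₀) := by rw [mul_comm, hLα]
  have hrate : α * μ ≤ 1 :=
    calc α * μ ≤ α * μ * D := le_mul_of_one_le_right (by positivity) (mod_cast hD)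
      _ ≤ 1 := hμα.trans (sub_le_self _ (Real.sqrt_nonneg _))
  have hgap (k : ℤ) : f (θ k) - fstar ≤ lyapunov f fstar (lagWeight D ξ₀ α) D θ k :=
    gap_le_lyapunov fun d hd => lagWeight_nonneg hξ₀.le hα₀.le (by grind)
  have hcontract (k : ℤ) (hk : 1 ≤ k) : lyapunov f fstar (lagWeight D ξ₀ α) D θ (k + 1)
      ≤ (1 - α * μ) * lyapunov f fstar (lagWeight D ξ₀ α) D θ k :=
    lyapunov_lagWeight_succ_le hf (fun y => hsmooth y _) (hPL _) hμ.le hD hξ₀ hα₀ hLα.le hμα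
      (hupd k hk) (herr k hk)
  have hcoeff : L / μ / (1 - Real.sqrt ((D : ℝ) * ξ₀)) = 1 / (α * μ) := by
    rw [hα]
    field_simp
  rw [hcoeff] at hK
  exact (hgap K).trans <| le_mul_of_geometric_decay (by positivity) hrate
    ((sub_nonneg.2 (hinf _)).trans (hgap 1)) hcontract hε₀ hε₁ hK

theorem lag_iteration_complexity_general {ι E : Type*} [Fintype ι] [NormedAddCommGroup E]
    [InnerProductSpace ℝ E] [CompleteSpace E] {D : ℕ} (hD : 1 ≤ D) {f : ι → E → ℝ}
    (hf : ∀ m, Differentiable ℝ (f m)) {L μ fstar : ℝ} (hL : 0 < L) (hμ : 0 < μ)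
    (hsmooth : ∀ x y, ‖gradient (fun z => ∑ m, f m z) x
      - gradient (fun z => ∑ m, f m z) y‖ ≤ L * ‖x - y‖)
    (hinf : ∀ x, fstar ≤ ∑ m, f m x)
    (hPL : ∀ x, 2 * μ * ((∑ m, f m x) - fstar) ≤ ‖gradient (fun z => ∑ m, f m z) x‖ ^ 2)
    (hκ : (D : ℝ) ≤ L / μ) {ξ₀ α : ℝ} (hξ₀ : 0 < ξ₀) (hξ₀D : ξ₀ < 1 / (D : ℝ))
    (hα : α = (1 - Real.sqrt ((D : ℝ) * ξ₀)) / L) {ξ β : ℕ → ℝ}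
    (hξ : ∀ d ∈ Icc 1 D, ξ d = ξ₀) (hβ : ∀ d ∈ Icc 1 D, β d = lagWeight D ξ₀ α d)
    {θ : ℤ → E} {stale : ℤ → Finset ι} {θhat : ℤ → ι → E}
    (hfresh : ∀ k, 1 ≤ k → ∀ m ∉ stale k, θhat k m = θ k)
    (hupd : ∀ k, 1 ≤ k → θ (k + 1) = θ k - α • ∑ m, gradient (f m) (θhat k m))
    (htrig : ∀ k, 1 ≤ k → ∀ m ∈ stale k,
      ‖gradient (f m) (θhat k m) - gradient (f m) (θ k)‖ ^ 2
        ≤ 1 / (α ^ 2 * (Fintype.card ι : ℝ) ^ 2) * weightedMovement ξ D θ k)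
    {ε : ℝ} (hε₀ : 0 < ε) (hε₁ : ε ≤ 1) {K : ℤ}
    (hK : (L / μ) / (1 - Real.sqrt ((D : ℝ) * ξ₀)) * Real.log (1 / ε) ≤ (K : ℝ) - 1) :
    (∑ m, f m (θ K)) - fstar ≤ ε * lyapunov (fun z => ∑ m, f m z) fstar β D θ 1 := by
  rw [lyapunov, weightedMovement_congr hβ]
  refine inexact_gradient_descent_gap_le (f := fun z => ∑ m, f m z) (by fun_prop) hL hμ hsmooth
    hinf hPL hD hκ hξ₀ hξ₀D hα hupd (fun k hk => ?_) hε₀ hε₁ hK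
  refine norm_sum_gradient_sub_gradient_sum_sq_le (fun m => hf m _)
    (mul_nonneg (by positivity) (weightedMovement_nonneg fun _ _ => hξ₀.le)) (hfresh k hk)
    fun m hm => (htrig k hk m hm).trans_eq ?_
  rw [weightedMovement_congr hξ]
  ring

/-- Iteration complexity bound (equation (18)): after
`K − 1 ≥ (κ/(1 − √(Dξ))) log(1/ε)` iterations the optimality gap is at most `ε V¹`. -/
theorem lag_iteration_complexity {n : ℕ}
    (M D : ℕ) (hM : 1 ≤ M) (hD : 1 ≤ D)
    (Lf : Fin M → EuclideanSpace ℝ (Fin n) → ℝ)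
    (hdiff : ∀ m, Differentiable ℝ (Lf m))
    (L : ℝ) (hL : 0 < L)
    (hsmooth : ∀ x y, ‖gradient (fun z => ∑ m, Lf m z) x
        - gradient (fun z => ∑ m, Lf m z) y‖ ≤ L * ‖x - y‖)
    (μ : ℝ) (hμ : 0 < μ)
    (Lstar : ℝ)
    (hinf : ∀ x, Lstar ≤ ∑ m, Lf m x)
    (hattain : ∃ x, (∑ m, Lf m x) = Lstar)
    (hPL : ∀ x, 2 * μ * ((∑ m, Lf m x) - Lstar)
      ≤ ‖gradient (fun z => ∑ m, Lf m z) x‖ ^ 2)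
    (hκ : (D : ℝ) ≤ L / μ)
    (ξ0 : ℝ) (hξ0 : 0 < ξ0) (hξ0D : ξ0 < 1 / (D : ℝ))
    (ξ : ℕ → ℝ) (hξ : ∀ d ∈ Finset.Icc 1 D, ξ d = ξ0)
    (α : ℝ) (hα : α = (1 - Real.sqrt ((D : ℝ) * ξ0)) / L)
    (β : ℕ → ℝ)
    (hβ : ∀ d ∈ Finset.Icc 1 D,
      β d = ((D : ℝ) - (d : ℝ) + 1) * ξ0 / (2 * α * Real.sqrt ((D : ℝ) * ξ0)))
    (hβD : β (D + 1) = 0)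
    (θ : ℤ → EuclideanSpace ℝ (Fin n))
    (hpast : ∀ k : ℤ, k ≤ 1 → θ k = θ 1)
    (Mc : ℤ → Finset (Fin M))
    (θhat : ℤ → Fin M → EuclideanSpace ℝ (Fin n))
    (hhat0 : ∀ m, θhat 0 m = θ 1)
    (hhat : ∀ k : ℤ, 1 ≤ k → ∀ m : Fin M,
      (m ∈ Mc k → θhat k m = θhat (k - 1) m) ∧ (m ∉ Mc k → θhat k m = θ k))
    (hupd : ∀ k : ℤ, 1 ≤ k →
      θ (k + 1) = θ k - α • ∑ m, gradient (Lf m) (θhat k m))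
    (htrig : ∀ k : ℤ, 1 ≤ k → ∀ m ∈ Mc k,
      ‖gradient (Lf m) (θhat k m) - gradient (Lf m) (θ k)‖ ^ 2
        ≤ (1 / (α ^ 2 * (M : ℝ) ^ 2)) *
            ∑ d ∈ Finset.Icc 1 D, ξ d * ‖θ (k + 1 - (d : ℤ)) - θ (k - (d : ℤ))‖ ^ 2)
    (V : ℤ → ℝ)
    (hV : ∀ k : ℤ, V k = (∑ m, Lf m (θ k)) - Lstar
      + ∑ d ∈ Finset.Icc 1 D, β d * ‖θ (k + 1 - (d : ℤ)) - θ (k - (d : ℤ))‖ ^ 2) :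
    ∀ ε : ℝ, 0 < ε → ε < 1 → ∀ K : ℤ,
      (K : ℝ) - 1 ≥ ((L / μ) / (1 - Real.sqrt ((D : ℝ) * ξ0))) * Real.log (1 / ε) →
      (∑ m, Lf m (θ K)) - Lstar ≤ ε * V 1 := by
  intro ε hε₀ hε₁ K hK
  exact hV 1 ▸ lag_iteration_complexity_general hD hdiff hL hμ hsmooth hinf hPL hκ hξ0 hξ0D hα hξ
    hβ (fun k hk m => (hhat k hk m).2) hupd
    (by simpa only [weightedMovement, Fintype.card_fin] using htrig) hε₀ hε₁.le hK
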